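/- arXiv:2004.06712 — 2 statements merged into one kernel-verified Lean document; each statement's English description precedes it below -/
import Mathlib

section
/- For every d ∈ ℕ there exist a constant χ_d > 0, a family of positive reals (a_k)_{k ∈ ℕ₀^d} with ∑_k a_k = 1, and a function m : ℕ → ℕ with the following property: for every σ-finite measure space (Ω, 𝒜, μ) and any commuting positive linear contractions T₁,…,T_d of L¹(μ), the operator S = ∑_{k ∈ ℕ₀^d} a_k T₁^{k₁}⋯T_d^{k_d} (the series converging in operator norm on L¹) is a positive contraction of L¹(μ) satisfying, for every n ≥ 1 and every f ∈ L¹(μ) with f ≥ 0 a.e., the pointwise a.e. inequality (1/n^d) ∑_{i₁=0}^{n−1} ⋯ ∑_{i_d=0}^{n−1} T₁^{i₁}⋯T_d^{i_d} f ≤ (χ_d / m(n)) ∑_{j=0}^{m(n)−1} S^j f. -/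
open MeasureTheory Filter Set ENNReal Topology

/-!
Fix `0 < α` small and let `B` be the generating series of the distribution on `ℕ` with tails
`ℙ(X > t) = (t + 2) ^ (-α)`. Take `S = B(T₁) ⋯ B(T_d)`, so that `a_k` is the product of the
coefficients `[X ^ kᵢ] B`, and formally `S ^ j = ∑ₖ (∏ᵢ [X ^ kᵢ] B ^ j) T ^ k`. To bound the average
over the box `[0, n) ^ d` by a multiple of the average of `S ^ j` over `j < m` it suffices that
`∑_{j < m} ∏ᵢ [X ^ kᵢ] B ^ j ≥ c m / n ^ d` for every `k` in the box.

The series `B ^ (j + 1)` generates the law of a sum of `j + 1` independent copies of `X`. While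
`j ≲ k ^ α`, this sum can reach `k` by one big jump, any single summand being of order `k` and the
others small, whence `[X ^ k] B ^ (j + 1) ≳ (j + 1) k ^ (-1 - α)`. Summing the product of these
bounds over `j ≲ (min kᵢ) ^ α` gives the required estimate with `m ≈ n ^ α`, provided `α d ≤ 1`.
-/

section Cones

variable {R σ : Type*} [SetLike σ R]

theorem pow_sub_pow_mem [Ring R] [SubsemiringClass σ R] {P : σ} {r s : R} (hr : r ∈ P)
    (hsr : s - r ∈ P) (j : ℕ) : s ^ j - r ^ j ∈ P := by
  have hs : s ∈ P := sub_add_cancel s r ▸ add_mem hsr hr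
  induction j with
  | zero => simp
  | succ j ih =>
    have split : s ^ (j + 1) - r ^ (j + 1) = (s ^ j - r ^ j) * s + r ^ j * (s - r) := by
      simp only [pow_succ, sub_mul, mul_sub]
      abel
    exact split ▸ add_mem (mul_mem ih hs) (mul_mem (pow_mem hr j) hsr)

theorem prod_sub_prod_mem [CommRing R] [SubsemiringClass σ R] {P : σ} {ι : Type*}
    {s : Finset ι} {x y : ι → R} (hy : ∀ i ∈ s, y i ∈ P) (hxy : ∀ i ∈ s, x i - y i ∈ P) :
    ∏ i ∈ s, x i - ∏ i ∈ s, y i ∈ P := by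
  classical
  induction s using Finset.induction_on with
  | empty => simp
  | insert a s ha ih =>
    simp only [Finset.forall_mem_insert] at hy hxy
    have hx : x a ∈ P := sub_add_cancel (x a) (y a) ▸ add_mem hxy.1 hy.1
    rw [Finset.prod_insert ha, Finset.prod_insert ha]
    have split : x a * ∏ i ∈ s, x i - y a * ∏ i ∈ s, y i
        = x a * (∏ i ∈ s, x i - ∏ i ∈ s, y i) + (x a - y a) * ∏ i ∈ s, y i := by ring
    exact split ▸ add_mem (mul_mem hx (ih hy.2 hxy.2)) (mul_mem hxy.1 (prod_mem hy.2))

theorem add_pow_succ_sub_mem [CommRing R] [SubsemiringClass σ R] {P : σ} {r s : R} (hr : r ∈ P)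
    (hs : s ∈ P) (j : ℕ) : (r + s) ^ (j + 1) - (j + 1) • (r ^ j * s) ∈ P := by
  have expand : (r + s) ^ (j + 1) - (j + 1) • (r ^ j * s)
      = ∑ i ∈ Finset.range j, r ^ i * s ^ (j + 1 - i) * (j + 1).choose i + r ^ (j + 1) := by
    simp only [add_pow, Finset.sum_range_succ, Nat.add_sub_cancel_left, Nat.sub_self,
      Nat.choose_succ_self_right, Nat.choose_self, nsmul_eq_mul]
    ring
  rw [expand]
  exact add_mem (sum_mem fun i _ => mul_mem (mul_mem (pow_mem hr _) (pow_mem hs _))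
    (natCast_mem P _)) (pow_mem hr _)

end Cones

section NonnegPowerSeries

open PowerSeries

variable {R : Type*} [CommRing R] [PartialOrder R] [IsOrderedRing R]

variable (R) in
/-- The cone of power series all of whose coefficients are nonnegative. -/
def nonnegPowerSeries : Subsemiring R⟦X⟧ where
  carrier := {f | ∀ n, 0 ≤ coeff n f}
  zero_mem' n := by simp
  one_mem' n := by
    rw [coeff_one]
    split_ifs <;> simp
  add_mem' hf hg n := by simpa using add_nonneg (hf n) (hg n)
  mul_mem' hf hg n := by
    rw [coeff_mul]
    exact Finset.sum_nonneg fun i _ => mul_nonneg (hf _) (hg _)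

theorem coeff_mul_eq_sum_range {R : Type*} [Semiring R] (f g : R⟦X⟧) (n : ℕ) :
    coeff n (f * g) = ∑ i ∈ Finset.range (n + 1), coeff i f * coeff (n - i) g := by
  rw [coeff_mul, Finset.Nat.sum_antidiagonal_eq_sum_range_succ_mk]

theorem coeff_trunc_pow {R : Type*} [CommSemiring R] (f : R⟦X⟧) {n k : ℕ} (hk : k < n) (j : ℕ) :
    coeff k ((trunc n f : R⟦X⟧) ^ j) = coeff k (f ^ j) := by
  simpa only [coeff_trunc, if_pos hk, ← Polynomial.coe_pow, Polynomial.coeff_coe] using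
    congrArg (Polynomial.coeff · k) (trunc_trunc_pow f n j)

theorem trunc_mem_nonnegPowerSeries {f : R⟦X⟧} (hf : f ∈ nonnegPowerSeries R) (n : ℕ) :
    (trunc n f : R⟦X⟧) ∈ nonnegPowerSeries R := fun k => by
  rw [Polynomial.coeff_coe, coeff_trunc]
  split_ifs
  exacts [hf k, le_rfl]

theorem sub_trunc_mem_nonnegPowerSeries {f : R⟦X⟧} (hf : f ∈ nonnegPowerSeries R) (n : ℕ) :
    f - trunc n f ∈ nonnegPowerSeries R := fun k => by
  rw [map_sub, Polynomial.coeff_coe, coeff_trunc]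
  split_ifs
  exacts [(sub_self _).ge, (hf k).trans (sub_zero _).ge]

theorem sum_range_coeff_mul_le {f g : R⟦X⟧} (hf : f ∈ nonnegPowerSeries R)
    (hg : g ∈ nonnegPowerSeries R) (K : ℕ) :
    ∑ k ∈ Finset.range K, coeff k (f * g)
      ≤ (∑ k ∈ Finset.range K, coeff k f) * ∑ k ∈ Finset.range K, coeff k g := by
  simp_rw [coeff_mul_eq_sum_range]
  rw [Finset.sum_range_diag_flip K fun i l => coeff i f * coeff l g, Finset.sum_mul]
  refine Finset.sum_le_sum fun i _ => ?_
  rw [← Finset.mul_sum]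
  refine mul_le_mul_of_nonneg_left (Finset.sum_le_sum_of_subset_of_nonneg ?_ fun l _ _ => hg l)
    (hf i)
  exact Finset.range_mono (Nat.sub_le K i)

theorem sum_range_coeff_pow_le_one {f : R⟦X⟧} (hf : f ∈ nonnegPowerSeries R) {K : ℕ}
    (hsum : ∑ k ∈ Finset.range K, coeff k f ≤ 1) (j : ℕ) :
    ∑ k ∈ Finset.range K, coeff k (f ^ j) ≤ 1 := by
  induction j with
  | zero =>
    simp only [pow_zero, coeff_one, Finset.sum_ite_eq']
    split_ifs <;> simp
  | succ j ih =>
    rw [pow_succ]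
    exact (sum_range_coeff_mul_le (pow_mem hf j) hf K).trans
      (mul_le_one₀ ih (Finset.sum_nonneg fun k _ => hf k) hsum)

/-- The generating series of the tails `ℙ(X > t)` of a distribution on `ℕ` with generating series
`f`. -/
noncomputable def tailSeries {R : Type*} [CommRing R] (f : R⟦X⟧) : R⟦X⟧ := mk 1 * (1 - f)

theorem coeff_tailSeries {R : Type*} [CommRing R] (f : R⟦X⟧) (t : ℕ) :
    coeff t (tailSeries f) = 1 - ∑ y ∈ Finset.range (t + 1), coeff y f := by
  rw [tailSeries, mul_comm, coeff_mul_eq_sum_range]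
  simp [coeff_one]

theorem tailSeries_pow {R : Type*} [CommRing R] (f : R⟦X⟧) (j : ℕ) :
    tailSeries (f ^ j) = ∑ i ∈ Finset.range j, tailSeries f * f ^ i := by
  rw [tailSeries, tailSeries, ← Finset.mul_sum, mul_assoc, mul_neg_geom_sum]

-- Markov's inequality for `min S K`, where `S` is a sum of `j` independent copies of `X`:
-- the right-hand sum is `𝔼[min X K]`, and `min · K` is subadditive.
theorem mul_one_sub_sum_coeff_pow_le {f : R⟦X⟧} (hf : f ∈ nonnegPowerSeries R)
    (hsum : ∀ K, ∑ k ∈ Finset.range K, coeff k f ≤ 1) (j K : ℕ) :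
    K * (1 - ∑ k ∈ Finset.range K, coeff k (f ^ j))
      ≤ j * ∑ t ∈ Finset.range K, coeff t (tailSeries f) := by
  have htail : tailSeries f ∈ nonnegPowerSeries R := fun t => by
    simpa only [coeff_tailSeries, sub_nonneg] using hsum (t + 1)
  calc
    (K : R) * (1 - ∑ k ∈ Finset.range K, coeff k (f ^ j))
    _ = ∑ _t ∈ Finset.range K, (1 - ∑ k ∈ Finset.range K, coeff k (f ^ j)) := by
      rw [Finset.sum_const, Finset.card_range, nsmul_eq_mul]
    _ ≤ ∑ t ∈ Finset.range K, coeff t (tailSeries (f ^ j)) := by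
      refine Finset.sum_le_sum fun t ht => ?_
      rw [coeff_tailSeries]
      refine sub_le_sub_left (Finset.sum_le_sum_of_subset_of_nonneg ?_ fun k _ _ =>
        pow_mem hf j k) 1
      exact Finset.range_mono (Finset.mem_range.mp ht)
    _ = ∑ i ∈ Finset.range j, ∑ t ∈ Finset.range K, coeff t (tailSeries f * f ^ i) := by
      rw [Finset.sum_comm]
      simp only [tailSeries_pow, map_sum]
    _ ≤ ∑ _i ∈ Finset.range j, ∑ t ∈ Finset.range K, coeff t (tailSeries f) := by
      refine Finset.sum_le_sum fun i _ => ?_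
      refine (sum_range_coeff_mul_le htail (pow_mem hf i) K).trans ?_
      exact mul_le_of_le_one_right (Finset.sum_nonneg fun t _ => htail t)
        (sum_range_coeff_pow_le_one hf (hsum K) i)
    _ = j * ∑ t ∈ Finset.range K, coeff t (tailSeries f) := by simp

-- One big jump: exactly one of the `j + 1` summands reaches the truncation level `K`.
theorem mul_sum_coeff_pow_le_coeff_pow_succ {f : R⟦X⟧} (hf : f ∈ nonnegPowerSeries R) {β : R}
    {K k : ℕ} (hβ : ∀ y, K ≤ y → y ≤ k → β ≤ coeff y f) (hK : 2 * K ≤ k + 1) (j : ℕ) :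
    (j + 1) * ((∑ i ∈ Finset.range K, coeff i (f ^ j)) * β) ≤ coeff k (f ^ (j + 1)) := by
  set s : R⟦X⟧ := ↑(trunc K f) with hs
  have hs_mem : s ∈ nonnegPowerSeries R := trunc_mem_nonnegPowerSeries hf K
  have hg_mem : f - s ∈ nonnegPowerSeries R := sub_trunc_mem_nonnegPowerSeries hf K
  have small_then_big :
      (∑ i ∈ Finset.range K, coeff i (f ^ j)) * β ≤ coeff k (s ^ j * (f - s)) := by
    rw [coeff_mul_eq_sum_range, Finset.sum_mul]
    refine (Finset.sum_le_sum fun i hi => ?_).trans (Finset.sum_le_sum_of_subset_of_nonneg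
      (Finset.range_mono (by lia : K ≤ k + 1)) fun i _ _ =>
        mul_nonneg (pow_mem hs_mem j i) (hg_mem _))
    have hiK : i < K := Finset.mem_range.mp hi
    rw [hs, coeff_trunc_pow f hiK]
    refine mul_le_mul_of_nonneg_left ?_ (pow_mem hf j i)
    rw [map_sub, Polynomial.coeff_coe, coeff_trunc, if_neg (by lia), sub_zero]
    exact hβ (k - i) (by lia) (Nat.sub_le k i)
  have one_big : 0 ≤ coeff k ((s + (f - s)) ^ (j + 1) - (j + 1) • (s ^ j * (f - s))) :=
    add_pow_succ_sub_mem hs_mem hg_mem j k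
  rw [add_sub_cancel, map_sub, map_nsmul, sub_nonneg, nsmul_eq_mul, Nat.cast_succ] at one_big
  exact (mul_le_mul_of_nonneg_left small_then_big
    (add_nonneg j.cast_nonneg zero_le_one)).trans one_big

end NonnegPowerSeries

section BrunelSeries

open PowerSeries

theorem sub_one_rpow_le {x p : ℝ} (hx : 1 ≤ x) (hp0 : 0 ≤ p) (hp1 : p ≤ 1) :
    (x - 1) ^ p ≤ x ^ p * (1 - p / x) := by
  have hx0 : 0 < x := zero_lt_one.trans_le hx
  have hinv : -1 ≤ -x⁻¹ := neg_le_neg (inv_le_one_of_one_le₀ hx)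
  calc (x - 1) ^ p = x ^ p * (1 + -x⁻¹) ^ p := by
        rw [← Real.mul_rpow hx0.le (by linarith), mul_add, mul_neg, mul_inv_cancel₀ hx0.ne',
          mul_one, sub_eq_add_neg]
    _ ≤ x ^ p * (1 + p * -x⁻¹) := by
        gcongr
        exact rpow_one_add_le_one_add_mul_self hinv hp0 hp1
    _ = x ^ p * (1 - p / x) := by ring

theorem sum_range_rpow_neg_le {α : ℝ} (hα0 : 0 ≤ α) (hα1 : α < 1) (K : ℕ) :
    ∑ t ∈ Finset.range K, ((t : ℝ) + 1) ^ (-α) ≤ (K : ℝ) ^ (1 - α) / (1 - α) := by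
  rw [le_div_iff₀ (sub_pos.mpr hα1)]
  induction K with
  | zero => simp [Real.zero_rpow (sub_pos.mpr hα1).ne']
  | succ K ih =>
    have hK : (0 : ℝ) < K + 1 := K.cast_add_one_pos
    have increment : (K : ℝ) ^ (1 - α) ≤ ((K : ℝ) + 1) ^ (1 - α) - ((K : ℝ) + 1) ^ (-α) * (1 - α) :=
      calc (K : ℝ) ^ (1 - α) ≤ ((K : ℝ) + 1) ^ (1 - α) * (1 - (1 - α) / (K + 1)) := by
            simpa using sub_one_rpow_le (x := (K : ℝ) + 1) (p := 1 - α) (by simp) (by linarith)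
              (by linarith)
        _ = ((K : ℝ) + 1) ^ (1 - α) - ((K : ℝ) + 1) ^ (-α) * (1 - α) := by
            rw [sub_eq_add_neg 1 α, Real.rpow_add hK, Real.rpow_one]
            field_simp
    rw [Finset.sum_range_succ, add_mul]
    push_cast
    linarith

/-- The generating series of the probability distribution on `ℕ` with tails
`ℙ(X > t) = (t + 2) ^ (-α)`; its `j`-th power generates the law of a sum of `j` independent
copies of `X`. -/
noncomputable def brunelSeries (α : ℝ) : ℝ⟦X⟧ :=
  mk fun y => ((y : ℝ) + 1) ^ (-α) - ((y : ℝ) + 2) ^ (-α)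

variable {α : ℝ}

theorem sum_range_coeff_brunelSeries (α : ℝ) (n : ℕ) :
    ∑ y ∈ Finset.range n, coeff y (brunelSeries α) = 1 - ((n : ℝ) + 1) ^ (-α) := by
  have telescope := Finset.sum_range_sub' (fun y : ℕ => ((y : ℝ) + 1) ^ (-α)) n
  simpa [brunelSeries, add_assoc, one_add_one_eq_two] using telescope

theorem sum_range_coeff_brunelSeries_le_one (α : ℝ) (n : ℕ) :
    ∑ y ∈ Finset.range n, coeff y (brunelSeries α) ≤ 1 := by
  rw [sum_range_coeff_brunelSeries]
  exact sub_le_self _ (by positivity)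

theorem rpow_le_coeff_brunelSeries (hα0 : 0 < α) (hα1 : α ≤ 1) (y : ℕ) :
    α / 2 * ((y : ℝ) + 1) ^ (-1 - α) ≤ coeff y (brunelSeries α) := by
  have hy : (0 : ℝ) < y + 1 := y.cast_add_one_pos
  have hy2 : (0 : ℝ) < y + 2 := by positivity
  have bernoulli : ((y : ℝ) + 1) ^ α ≤ ((y : ℝ) + 2) ^ α * (1 - α / (y + 2)) := by
    have h := sub_one_rpow_le (x := (y : ℝ) + 2) (p := α) (by linarith) hα0.le hα1
    rwa [show (y : ℝ) + 2 - 1 = y + 1 by ring] at h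
  rw [brunelSeries, coeff_mk]
  calc α / 2 * ((y : ℝ) + 1) ^ (-1 - α)
      = ((y : ℝ) + 1) ^ (-α) * (α / (2 * (y + 1))) := by
        rw [sub_eq_add_neg, Real.rpow_add hy, Real.rpow_neg_one]
        field_simp
    _ ≤ ((y : ℝ) + 1) ^ (-α) * (α / (y + 2)) := by
        gcongr
        linarith
    _ ≤ ((y : ℝ) + 1) ^ (-α) - ((y : ℝ) + 2) ^ (-α) := by
        rw [Real.rpow_neg hy.le, Real.rpow_neg hy2.le]
        have hA : 0 < ((y : ℝ) + 1) ^ α := by positivity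
        have hB : 0 < ((y : ℝ) + 2) ^ α := by positivity
        have : (((y : ℝ) + 2) ^ α)⁻¹ ≤ (((y : ℝ) + 1) ^ α)⁻¹ * (1 - α / (y + 2)) := by
          rwa [inv_mul_eq_div, le_div_iff₀ hA, inv_mul_le_iff₀ hB]
        linarith

theorem coeff_brunelSeries_pos (hα0 : 0 < α) (hα1 : α ≤ 1) (y : ℕ) :
    0 < coeff y (brunelSeries α) :=
  lt_of_lt_of_le (by positivity) (rpow_le_coeff_brunelSeries hα0 hα1 y)

theorem brunelSeries_mem_nonnegPowerSeries (hα0 : 0 < α) (hα1 : α ≤ 1) :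
    brunelSeries α ∈ nonnegPowerSeries ℝ :=
  fun y => (coeff_brunelSeries_pos hα0 hα1 y).le

theorem hasSum_coeff_brunelSeries (hα0 : 0 < α) (hα1 : α ≤ 1) :
    HasSum (fun y => coeff y (brunelSeries α)) 1 := by
  rw [hasSum_iff_tendsto_nat_of_nonneg (brunelSeries_mem_nonnegPowerSeries hα0 hα1)]
  simp_rw [sum_range_coeff_brunelSeries]
  have tail_tendsto_zero := (tendsto_rpow_neg_atTop hα0).comp
    (tendsto_atTop_add_const_right _ (1 : ℝ) tendsto_natCast_atTop_atTop)
  simpa using tail_tendsto_zero.const_sub 1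

theorem sum_range_coeff_tailSeries_brunelSeries_le (hα0 : 0 ≤ α) (hα1 : α < 1) (K : ℕ) :
    ∑ t ∈ Finset.range K, coeff t (tailSeries (brunelSeries α)) ≤ (K : ℝ) ^ (1 - α) / (1 - α) := by
  refine (Finset.sum_le_sum fun t _ => ?_).trans (sum_range_rpow_neg_le hα0 hα1 K)
  rw [coeff_tailSeries, sum_range_coeff_brunelSeries, sub_sub_self]
  push_cast
  exact Real.rpow_le_rpow_of_nonpos (by positivity) (by linarith) (by linarith)

theorem half_le_sum_coeff_brunelSeries_pow (hα0 : 0 < α) (hα1 : α ≤ 1 / 2) {j K : ℕ} (hK : 0 < K)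
    (hj : 4 * (j : ℝ) ≤ (K : ℝ) ^ α) :
    1 / 2 ≤ ∑ k ∈ Finset.range K, coeff k (brunelSeries α ^ j) := by
  have hK' : (0 : ℝ) < K := Nat.cast_pos.mpr hK
  have truncated_mean :
      ∑ t ∈ Finset.range K, coeff t (tailSeries (brunelSeries α)) ≤ 2 * (K : ℝ) ^ (1 - α) := by
    refine (sum_range_coeff_tailSeries_brunelSeries_le hα0.le (by linarith) K).trans ?_
    rw [div_le_iff₀ (by linarith)]
    nlinarith [Real.rpow_nonneg hK'.le (1 - α)]
  have markov : K * (1 - ∑ k ∈ Finset.range K, coeff k (brunelSeries α ^ j)) ≤ K * (1 / 2) :=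
    calc K * (1 - ∑ k ∈ Finset.range K, coeff k (brunelSeries α ^ j))
        ≤ j * ∑ t ∈ Finset.range K, coeff t (tailSeries (brunelSeries α)) :=
          mul_one_sub_sum_coeff_pow_le (brunelSeries_mem_nonnegPowerSeries hα0 (by linarith))
            (sum_range_coeff_brunelSeries_le_one α) j K
      _ ≤ j * (2 * (K : ℝ) ^ (1 - α)) := by gcongr
      _ = 4 * j * (K : ℝ) ^ (1 - α) / 2 := by ring
      _ ≤ (K : ℝ) ^ α * (K : ℝ) ^ (1 - α) / 2 := by gcongr
      _ = K * (1 / 2) := by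
          rw [← Real.rpow_add hK', add_sub_cancel, Real.rpow_one]
          ring
  linarith [le_of_mul_le_mul_left markov hK']

theorem rpow_le_coeff_brunelSeries_pow_succ (hα0 : 0 < α) (hα1 : α ≤ 1 / 2) {j k : ℕ}
    (hj : 12 * (j : ℝ) ≤ ((k : ℝ) + 1) ^ α) :
    ((j : ℝ) + 1) * (α / 4 * ((k : ℝ) + 1) ^ (-1 - α)) ≤ coeff k (brunelSeries α ^ (j + 1)) := by
  have hα : α ≤ 1 := by linarith
  rcases Nat.eq_zero_or_pos k with rfl | hk
  · have hj0 : j = 0 := by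
      have : (j : ℝ) < 1 := by
        norm_num at hj
        linarith
      exact Nat.lt_one_iff.mp (mod_cast this)
    subst hj0
    have h0 := rpow_le_coeff_brunelSeries hα0 hα 0
    norm_num at h0 ⊢
    linarith
  obtain ⟨K, hK⟩ : ∃ K, K = (k + 1) / 2 := ⟨_, rfl⟩
  have hK3 : (k : ℝ) + 1 ≤ 3 * K := by exact_mod_cast (by lia : k + 1 ≤ 3 * K)
  have hKα : ((k : ℝ) + 1) ^ α ≤ 3 * (K : ℝ) ^ α :=
    calc ((k : ℝ) + 1) ^ α ≤ (3 * (K : ℝ)) ^ α := by gcongr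
      _ = 3 ^ α * (K : ℝ) ^ α := Real.mul_rpow (by norm_num) K.cast_nonneg
      _ ≤ 3 * (K : ℝ) ^ α := by
          gcongr
          exact Real.rpow_le_self_of_one_le (by norm_num) hα
  have coeff_ge : ∀ y, K ≤ y → y ≤ k →
      α / 2 * ((k : ℝ) + 1) ^ (-1 - α) ≤ coeff y (brunelSeries α) := fun y _ hyk => by
    refine le_trans ?_ (rpow_le_coeff_brunelSeries hα0 hα y)
    refine mul_le_mul_of_nonneg_left ?_ (by positivity)
    exact Real.rpow_le_rpow_of_nonpos (by positivity) (by gcongr) (by linarith)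
  calc ((j : ℝ) + 1) * (α / 4 * ((k : ℝ) + 1) ^ (-1 - α))
      = (j + 1) * (1 / 2 * (α / 2 * ((k : ℝ) + 1) ^ (-1 - α))) := by ring
    _ ≤ (j + 1) * ((∑ i ∈ Finset.range K, coeff i (brunelSeries α ^ j))
          * (α / 2 * ((k : ℝ) + 1) ^ (-1 - α))) := by
        gcongr
        exact half_le_sum_coeff_brunelSeries_pow hα0 hα1 (by lia) (by linarith)
    _ ≤ coeff k (brunelSeries α ^ (j + 1)) :=
        mul_sum_coeff_pow_le_coeff_pow_succ (brunelSeries_mem_nonnegPowerSeries hα0 hα) coeff_ge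
          (by lia) j

end BrunelSeries

theorem pow_succ_le_mul_sum_range_pow (d N : ℕ) :
    (N : ℝ) ^ (d + 1) ≤ (d + 1) * ∑ j ∈ Finset.range N, ((j : ℝ) + 1) ^ d := by
  have increment (j : ℕ) :
      ((j : ℝ) + 1) ^ (d + 1) - (j : ℝ) ^ (d + 1) ≤ (d + 1) * ((j : ℝ) + 1) ^ d := by
    have h := (le_abs_self _).trans (abs_pow_sub_pow_le ((j : ℝ) + 1) (j : ℝ) (d + 1))
    rw [abs_of_nonneg (by linarith), abs_of_nonneg j.cast_add_one_pos.le,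
      abs_of_nonneg j.cast_nonneg, max_eq_left (by linarith)] at h
    simpa using h
  calc (N : ℝ) ^ (d + 1)
      = ∑ j ∈ Finset.range N, (((j : ℝ) + 1) ^ (d + 1) - (j : ℝ) ^ (d + 1)) := by
        simpa using (Finset.sum_range_sub (fun j : ℕ => (j : ℝ) ^ (d + 1)) N).symm
    _ ≤ ∑ j ∈ Finset.range N, (d + 1) * ((j : ℝ) + 1) ^ d :=
        Finset.sum_le_sum fun j _ => increment j
    _ = (d + 1) * ∑ j ∈ Finset.range N, ((j : ℝ) + 1) ^ d := by rw [Finset.mul_sum]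

theorem exists_rpow_le_rpow_mul_prod_rpow {ι : Type*} [Fintype ι] {α n : ℝ} (hα0 : 0 ≤ α)
    (hα1 : α * Fintype.card ι ≤ 1) (hn : 0 < n) {x : ι → ℝ} (hx0 : ∀ i, 0 < x i)
    (hxn : ∀ i, x i ≤ n) :
    ∃ s, 0 < s ∧ s ≤ n ∧ (∀ i, s ≤ x i) ∧
      n ^ (α - Fintype.card ι) ≤ s ^ (α * (Fintype.card ι + 1)) * ∏ i, x i ^ (-1 - α) := by
  classical
  rcases isEmpty_or_nonempty ι with hι | hι
  · exact ⟨n, hn, le_rfl, fun i => hι.elim i, by simp⟩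
  obtain ⟨i₀, hmin⟩ := Finite.exists_min x
  refine ⟨x i₀, hx0 i₀, hxn i₀, hmin, ?_⟩
  have hcard : (((Finset.univ.erase i₀).card : ℕ) : ℝ) = Fintype.card ι - 1 := by
    rw [Finset.card_erase_of_mem (Finset.mem_univ i₀), Finset.card_univ,
      Nat.cast_pred Fintype.card_pos]
  calc n ^ (α - Fintype.card ι)
      = n ^ (α * Fintype.card ι - 1) * ∏ _i ∈ Finset.univ.erase i₀, n ^ (-1 - α) := by
        rw [Finset.prod_const, ← Real.rpow_mul_natCast hn.le, hcard, ← Real.rpow_add hn]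
        ring_nf
    _ ≤ x i₀ ^ (α * Fintype.card ι - 1) * ∏ i ∈ Finset.univ.erase i₀, x i ^ (-1 - α) := by
        gcongr ?_ * ∏ i ∈ _, ?_ with i
        · exact Real.rpow_nonneg (hx0 i₀).le _
        · exact Real.rpow_le_rpow_of_nonpos (hx0 i₀) (hxn i₀) (by linarith)
        · exact Real.rpow_le_rpow_of_nonpos (hx0 i) (hxn i) (by linarith)
    _ = x i₀ ^ (α * (Fintype.card ι + 1)) * ∏ i, x i ^ (-1 - α) := by
        rw [← Finset.mul_prod_erase Finset.univ _ (Finset.mem_univ i₀), ← mul_assoc,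
          ← Real.rpow_add (hx0 i₀)]
        ring_nf

section BoxLowerBound

open PowerSeries

variable {ι : Type*} [Fintype ι] {α : ℝ}

theorem mul_prod_rpow_le_prod_coeff (hα0 : 0 < α) (hα1 : α ≤ 1 / 2) {j : ℕ} {k : ι → ℕ}
    (hj : ∀ i, 12 * (j : ℝ) ≤ ((k i : ℝ) + 1) ^ α) :
    ((j : ℝ) + 1) ^ Fintype.card ι *
        ((α / 4) ^ Fintype.card ι * ∏ i, ((k i : ℝ) + 1) ^ (-1 - α))
      ≤ ∏ i, coeff (k i) (brunelSeries α ^ (j + 1)) :=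
  calc ((j : ℝ) + 1) ^ Fintype.card ι *
        ((α / 4) ^ Fintype.card ι * ∏ i, ((k i : ℝ) + 1) ^ (-1 - α))
      = ∏ i, ((j : ℝ) + 1) * (α / 4 * ((k i : ℝ) + 1) ^ (-1 - α)) := by
        simp only [Finset.prod_mul_distrib, Finset.prod_const, Finset.card_univ]
    _ ≤ ∏ i, coeff (k i) (brunelSeries α ^ (j + 1)) :=
        Finset.prod_le_prod (fun i _ => by positivity)
          fun i _ => rpow_le_coeff_brunelSeries_pow_succ hα0 hα1 (hj i)

theorem mul_prod_rpow_le_sum_prod_coeff (hα0 : 0 < α) (hα1 : α ≤ 1 / 2) {k : ι → ℕ} {s : ℝ}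
    (hs0 : 0 < s) (hsk : ∀ i, s ≤ (k i : ℝ) + 1) {m : ℕ} (hm : ⌊s ^ α / 12⌋₊ + 2 ≤ m) :
    (s ^ α / 12) ^ (Fintype.card ι + 1) / (Fintype.card ι + 1)
        * ((α / 4) ^ Fintype.card ι * ∏ i, ((k i : ℝ) + 1) ^ (-1 - α))
      ≤ ∑ j ∈ Finset.range m, ∏ i, coeff (k i) (brunelSeries α ^ j) := by
  have coeff_prod_nonneg : ∀ j, 0 ≤ ∏ i, coeff (k i) (brunelSeries α ^ j) := fun j =>
    Finset.prod_nonneg fun i _ =>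
      pow_mem (brunelSeries_mem_nonnegPowerSeries hα0 (by linarith)) j (k i)
  set N : ℕ := ⌊s ^ α / 12⌋₊ + 1 with hN
  have power_sum : (s ^ α / 12) ^ (Fintype.card ι + 1) / (Fintype.card ι + 1)
      ≤ ∑ j ∈ Finset.range N, ((j : ℝ) + 1) ^ Fintype.card ι := by
    rw [div_le_iff₀' (by positivity)]
    refine le_trans ?_ (pow_succ_le_mul_sum_range_pow _ N)
    gcongr
    exact_mod_cast (Nat.lt_floor_add_one (s ^ α / 12)).le
  calc (s ^ α / 12) ^ (Fintype.card ι + 1) / (Fintype.card ι + 1)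
        * ((α / 4) ^ Fintype.card ι * ∏ i, ((k i : ℝ) + 1) ^ (-1 - α))
      ≤ (∑ j ∈ Finset.range N, ((j : ℝ) + 1) ^ Fintype.card ι)
        * ((α / 4) ^ Fintype.card ι * ∏ i, ((k i : ℝ) + 1) ^ (-1 - α)) := by gcongr
    _ ≤ ∑ j ∈ Finset.range N, ∏ i, coeff (k i) (brunelSeries α ^ (j + 1)) := by
        rw [Finset.sum_mul]
        refine Finset.sum_le_sum fun j hj => mul_prod_rpow_le_prod_coeff hα0 hα1 fun i => ?_
        have hjs : (j : ℝ) ≤ s ^ α / 12 := by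
          rwa [Finset.mem_range, hN, Nat.lt_succ_iff, Nat.le_floor_iff (by positivity)] at hj
        have hsα : s ^ α ≤ ((k i : ℝ) + 1) ^ α := Real.rpow_le_rpow hs0.le (hsk i) hα0.le
        linarith
    _ ≤ ∑ j ∈ Finset.range (N + 1), ∏ i, coeff (k i) (brunelSeries α ^ j) := by
        rw [Finset.sum_range_succ' _ N]
        exact le_add_of_nonneg_right (coeff_prod_nonneg 0)
    _ ≤ ∑ j ∈ Finset.range m, ∏ i, coeff (k i) (brunelSeries α ^ j) :=
        Finset.sum_le_sum_of_subset_of_nonneg (Finset.range_mono hm) fun j _ _ =>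
          coeff_prod_nonneg j

theorem exists_mul_le_sum_prod_coeff (ι : Type*) [Fintype ι] (hα0 : 0 < α) (hα1 : α ≤ 1 / 2)
    (hα : α * Fintype.card ι ≤ 1) :
    ∃ c : ℝ, 0 < c ∧ ∀ n : ℕ, 1 ≤ n → ∀ k : ι → ℕ, (∀ i, k i < n) →
      c * (⌊(n : ℝ) ^ α⌋₊ + 2 : ℕ) * ((n : ℝ) ^ Fintype.card ι)⁻¹
        ≤ ∑ j ∈ Finset.range (⌊(n : ℝ) ^ α⌋₊ + 2), ∏ i, coeff (k i) (brunelSeries α ^ j) := by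
  set d := Fintype.card ι
  refine ⟨(α / 4) ^ d / (12 ^ (d + 1) * (d + 1)) / 3, by positivity, fun n hn k hk => ?_⟩
  have hn1 : (1 : ℝ) ≤ n := mod_cast hn
  have hn0 : (0 : ℝ) < n := by linarith
  obtain ⟨s, hs0, hsn, hsk, hprod⟩ := exists_rpow_le_rpow_mul_prod_rpow (ι := ι)
    (x := fun i => (k i : ℝ) + 1) hα0.le hα hn0 (fun i => (k i).cast_add_one_pos)
    fun i => mod_cast hk i
  have hsα : s ^ α ≤ (n : ℝ) ^ α := Real.rpow_le_rpow hs0.le hsn hα0.le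
  have hfloor : ⌊s ^ α / 12⌋₊ + 2 ≤ ⌊(n : ℝ) ^ α⌋₊ + 2 := by
    gcongr
    linarith [Real.rpow_nonneg hs0.le α]
  have hm : ((⌊(n : ℝ) ^ α⌋₊ + 2 : ℕ) : ℝ) ≤ 3 * (n : ℝ) ^ α := by
    push_cast
    linarith [Nat.floor_le (a := (n : ℝ) ^ α) (by positivity), Real.one_le_rpow hn1 hα0.le]
  calc (α / 4) ^ d / (12 ^ (d + 1) * (d + 1)) / 3 * (⌊(n : ℝ) ^ α⌋₊ + 2 : ℕ) * ((n : ℝ) ^ d)⁻¹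
      ≤ (α / 4) ^ d / (12 ^ (d + 1) * (d + 1)) / 3 * (3 * (n : ℝ) ^ α) * ((n : ℝ) ^ d)⁻¹ := by
        gcongr
    _ = (α / 4) ^ d / (12 ^ (d + 1) * (d + 1)) * (n : ℝ) ^ (α - d) := by
        rw [Real.rpow_sub_natCast hn0.ne']
        ring
    _ ≤ (α / 4) ^ d / (12 ^ (d + 1) * (d + 1))
          * (s ^ (α * (d + 1)) * ∏ i, ((k i : ℝ) + 1) ^ (-1 - α)) := by gcongr
    _ = (s ^ α / 12) ^ (d + 1) / (d + 1)
          * ((α / 4) ^ d * ∏ i, ((k i : ℝ) + 1) ^ (-1 - α)) := by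
        have hpow : s ^ (α * (d + 1)) = (s ^ α) ^ (d + 1) := by
          exact_mod_cast Real.rpow_mul_natCast hs0.le α (d + 1)
        rw [hpow, div_pow (s ^ α)]
        field_simp
    _ ≤ _ := mul_prod_rpow_le_sum_prod_coeff hα0 hα1 hs0 hsk hfloor

end BoxLowerBound

theorem hasSum_prod_pi {β : Type*} {d : ℕ} {f : Fin d → β → ℝ} {a : Fin d → ℝ}
    (hf : ∀ i b, 0 ≤ f i b) (hfa : ∀ i, HasSum (f i) (a i)) :
    HasSum (fun k : Fin d → β => ∏ i, f i (k i)) (∏ i, a i) := by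
  induction d with
  | zero => simp
  | succ d ih =>
    have htail := ih (fun i => hf i.succ) fun i => hfa i.succ
    have hsummable := (hfa 0).summable.mul_of_nonneg htail.summable (hf 0)
      fun k => Finset.prod_nonneg fun i _ => hf i.succ (k i)
    rw [← (Fin.consEquiv fun _ : Fin (d + 1) => β).hasSum_iff]
    simpa [Function.comp_def, Fin.consEquiv, Fin.prod_univ_succ] using
      (hfa 0).mul htail hsummable

open PowerSeries in
theorem hasSum_prod_coeff {f : ℝ⟦X⟧} (hf : f ∈ nonnegPowerSeries ℝ)
    (hsum : HasSum (fun y => coeff y f) 1) (d : ℕ) :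
    HasSum (fun k : Fin d → ℕ => ∏ i, coeff (k i) f) 1 := by
  simpa using hasSum_prod_pi (d := d) (fun _ => hf) fun _ => hsum

section PolynomialDomination

open PowerSeries
open scoped NNReal

theorem aeval_mem_of_coeff_nonneg {A : Type*} [Ring A] [Algebra ℝ A] {P : Subalgebra ℝ≥0 A} {t : A}
    (ht : t ∈ P) {p : Polynomial ℝ} (hp : ∀ k, 0 ≤ p.coeff k) : Polynomial.aeval t p ∈ P := by
  rw [Polynomial.aeval_eq_sum_range]
  exact sum_mem fun k _ => P.smul_mem (pow_mem ht k) (⟨p.coeff k, hp k⟩ : ℝ≥0)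

theorem aeval_trunc_pow_sub_mem {A : Type*} [Ring A] [Algebra ℝ A] {P : Subalgebra ℝ≥0 A} {t : A}
    (ht : t ∈ P) {f : ℝ⟦X⟧} (hf : f ∈ nonnegPowerSeries ℝ) (n j : ℕ) :
    Polynomial.aeval t (trunc n f) ^ j - Polynomial.aeval t (trunc n (f ^ j)) ∈ P := by
  rw [← map_pow, ← map_sub]
  refine aeval_mem_of_coeff_nonneg ht fun k => ?_
  rw [Polynomial.coeff_sub, ← Polynomial.coeff_coe (trunc n f ^ j), Polynomial.coe_pow,
    coeff_trunc]
  split_ifs with hk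
  · rw [coeff_trunc_pow f hk, sub_self]
  · rw [sub_zero]
    exact pow_mem (trunc_mem_nonnegPowerSeries hf n) j k

theorem prod_aeval_trunc {R A ι : Type*} [CommSemiring R] [CommSemiring A] [Algebra R A]
    [Fintype ι] [DecidableEq ι] (t : ι → A) (f : R⟦X⟧) (n : ℕ) :
    ∏ i, Polynomial.aeval (t i) (trunc n f)
      = ∑ k ∈ Fintype.piFinset fun _ : ι => Finset.range n,
          (∏ i, coeff (k i) f) • ∏ i, t i ^ k i := by
  simp only [Polynomial.aeval_def, eval₂_trunc_eq_sum_range, ← Algebra.smul_def,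
    Finset.prod_univ_sum, Finset.prod_smul]

theorem sum_smul_prod_pow_sub_mem {A ι : Type*} [CommRing A] [Algebra ℝ A] [Fintype ι]
    [DecidableEq ι] {P : Subalgebra ℝ≥0 A} {t : ι → A} (ht : ∀ i, t i ∈ P) {f : ℝ⟦X⟧}
    (hf : f ∈ nonnegPowerSeries ℝ) (n j : ℕ) :
    (∑ k ∈ Fintype.piFinset fun _ : ι => Finset.range n,
        (∏ i, coeff (k i) f) • ∏ i, t i ^ k i) ^ j
      - ∑ k ∈ Fintype.piFinset fun _ : ι => Finset.range n,
        (∏ i, coeff (k i) (f ^ j)) • ∏ i, t i ^ k i ∈ P := by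
  rw [← prod_aeval_trunc, ← prod_aeval_trunc, ← Finset.prod_pow]
  refine prod_sub_prod_mem (fun i _ => aeval_mem_of_coeff_nonneg (ht i) fun k => ?_)
    fun i _ => aeval_trunc_pow_sub_mem (ht i) hf n j
  simpa only [Polynomial.coeff_coe] using trunc_mem_nonnegPowerSeries (pow_mem hf j) n k

end PolynomialDomination

section OrderedMonomial

open PowerSeries
open scoped NNReal IsMulCommutative

/-- The monomial `T₁ ^ k₁ ⋯ T_d ^ k_d`, with the factors multiplied in this order. -/
def orderedMonomial {M : Type*} [Monoid M] {d : ℕ} (T : Fin d → M) (k : Fin d → ℕ) : M :=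
  (List.ofFn fun i => T i ^ k i).prod

theorem orderedMonomial_mem {M σ : Type*} [Monoid M] [SetLike σ M] [SubmonoidClass σ M] {P : σ}
    {d : ℕ} {T : Fin d → M} (hT : ∀ i, T i ∈ P) (k : Fin d → ℕ) : orderedMonomial T k ∈ P := by
  refine list_prod_mem fun x hx => ?_
  obtain ⟨i, rfl⟩ := List.mem_ofFn.mp hx
  exact pow_mem (hT i) (k i)

theorem map_prod_pow_eq_orderedMonomial {M N F : Type*} [CommMonoid M] [Monoid N] [FunLike F M N]
    [MonoidHomClass F M N] (φ : F) {d : ℕ} (t : Fin d → M) (k : Fin d → ℕ) :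
    φ (∏ i, t i ^ k i) = orderedMonomial (fun i => φ (t i)) k := by
  simp only [orderedMonomial, ← List.prod_ofFn, map_list_prod, List.map_ofFn, Function.comp_def,
    map_pow]

variable {A : Type*} [Ring A] [Algebra ℝ A] {P : Subalgebra ℝ≥0 A} {d : ℕ} {T : Fin d → A}
  {f : ℝ⟦X⟧}

theorem sum_smul_orderedMonomial_pow_sub_mem (hT : ∀ i, T i ∈ P)
    (hcomm : ∀ i j, Commute (T i) (T j)) (hf : f ∈ nonnegPowerSeries ℝ) (n j : ℕ) :
    (∑ k ∈ Fintype.piFinset fun _ : Fin d => Finset.range n,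
        (∏ i, coeff (k i) f) • orderedMonomial T k) ^ j
      - ∑ k ∈ Fintype.piFinset fun _ : Fin d => Finset.range n,
        (∏ i, coeff (k i) (f ^ j)) • orderedMonomial T k ∈ P := by
  have : IsMulCommutative (Algebra.adjoin ℝ (range T)) :=
    Algebra.isMulCommutative_adjoin ℝ (by
      rintro _ ⟨i, rfl⟩ _ ⟨j, rfl⟩
      exact hcomm i j)
  let φ : Algebra.adjoin ℝ (range T) →ₐ[ℝ] A := (Algebra.adjoin ℝ (range T)).val
  let t (i : Fin d) : Algebra.adjoin ℝ (range T) := ⟨T i, Algebra.subset_adjoin ⟨i, rfl⟩⟩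
  have ht : ∀ i, t i ∈ P.comap (φ.restrictScalars ℝ≥0) := hT
  have hmono (k : Fin d → ℕ) : φ (∏ i, t i ^ k i) = orderedMonomial T k :=
    map_prod_pow_eq_orderedMonomial φ t k
  have hmem : φ _ ∈ P := sum_smul_prod_pow_sub_mem ht hf n j
  simpa only [map_sub, map_pow, map_sum, map_smul, hmono] using hmem

theorem sum_pow_sub_smul_sum_orderedMonomial_mem (hT : ∀ i, T i ∈ P)
    (hcomm : ∀ i j, Commute (T i) (T j)) (hf : f ∈ nonnegPowerSeries ℝ) {n m : ℕ} {S : A}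
    (hS : S - ∑ k ∈ Fintype.piFinset fun _ : Fin d => Finset.range n,
      (∏ i, coeff (k i) f) • orderedMonomial T k ∈ P) {C : ℝ}
    (hC : ∀ k : Fin d → ℕ, (∀ i, k i < n) →
      C ≤ ∑ j ∈ Finset.range m, ∏ i, coeff (k i) (f ^ j)) :
    ∑ j ∈ Finset.range m, S ^ j
      - C • ∑ k ∈ Fintype.piFinset fun _ : Fin d => Finset.range n, orderedMonomial T k ∈ P := by
  set box := Fintype.piFinset fun _ : Fin d => Finset.range n
  set R := ∑ k ∈ box, (∏ i, coeff (k i) f) • orderedMonomial T k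
  have smul_mem {c : ℝ} (hc : 0 ≤ c) (k : Fin d → ℕ) : c • orderedMonomial T k ∈ P :=
    P.smul_mem (orderedMonomial_mem hT k) (⟨c, hc⟩ : ℝ≥0)
  have hR : R ∈ P := sum_mem fun k _ => smul_mem (Finset.prod_nonneg fun i _ => hf (k i)) k
  have powers (j : ℕ) :
      S ^ j - ∑ k ∈ box, (∏ i, coeff (k i) (f ^ j)) • orderedMonomial T k ∈ P := by
    rw [← sub_add_sub_cancel (S ^ j) (R ^ j)]
    exact add_mem (pow_sub_pow_mem hR hS j) (sum_smul_orderedMonomial_pow_sub_mem hT hcomm hf n j)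
  have surplus : ∑ k ∈ box,
      (∑ j ∈ Finset.range m, ∏ i, coeff (k i) (f ^ j) - C) • orderedMonomial T k ∈ P :=
    sum_mem fun k hk => smul_mem
      (sub_nonneg.mpr (hC k fun i => Finset.mem_range.mp (Fintype.mem_piFinset.mp hk i))) k
  convert add_mem (sum_mem fun j (_ : j ∈ Finset.range m) => powers j) surplus using 1
  simp only [sub_smul, Finset.sum_sub_distrib, Finset.sum_smul, Finset.smul_sum]
  rw [Finset.sum_comm (s := box), sub_add_sub_cancel]

end OrderedMonomial

section PositiveContractions

open scoped NNReal

/-- The positive operators on an ordered normed space, closed under composition and under linear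
combinations with nonnegative coefficients. -/
def positiveOperators (E : Type*) [NormedAddCommGroup E] [NormedSpace ℝ E] [PartialOrder E]
    [IsOrderedAddMonoid E] [PosSMulMono ℝ E] : Subalgebra ℝ≥0 (E →L[ℝ] E) where
  carrier := {A | ∀ f, 0 ≤ f → 0 ≤ A f}
  mul_mem' hA hB f hf := hA _ (hB f hf)
  add_mem' hA hB f hf := add_nonneg (hA f hf) (hB f hf)
  algebraMap_mem' c f hf := by
    rw [Algebra.algebraMap_eq_smul_one]
    exact smul_nonneg c.coe_nonneg hf

/-- The monoid of contractions of a normed space under composition, that is, of the operators of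
norm at most one. -/
def contractions (E : Type*) [SeminormedAddCommGroup E] [NormedSpace ℝ E] :
    Submonoid (E →L[ℝ] E) where
  carrier := {A | ∀ f, ‖A f‖ ≤ ‖f‖}
  one_mem' _ := le_rfl
  mul_mem' hA hB f := (hA _).trans (hB f)

variable {ι E : Type*} [NormedAddCommGroup E] [NormedSpace ℝ E] {a : ι → ℝ} {W : ι → E →L[ℝ] E}
  {S : E →L[ℝ] E}

theorem hasSum_clm_apply (hS : HasSum W S) (f : E) : HasSum (fun k => W k f) (S f) :=
  (ContinuousLinearMap.apply ℝ E f).hasSum hS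

theorem summable_smul_of_mem_contractions [CompleteSpace E] (ha0 : ∀ k, 0 ≤ a k) (ha : Summable a)
    (hW : ∀ k, W k ∈ contractions E) : Summable fun k => a k • W k := by
  refine ha.of_norm_bounded fun k => ?_
  rw [norm_smul, Real.norm_of_nonneg (ha0 k)]
  refine mul_le_of_le_one_right (ha0 k) ?_
  exact (W k).opNorm_le_bound zero_le_one fun f => (hW k f).trans_eq (one_mul _).symm

theorem mem_contractions_of_hasSum_smul (ha0 : ∀ k, 0 ≤ a k) (ha : HasSum a 1)
    (hW : ∀ k, W k ∈ contractions E) (hS : HasSum (fun k => a k • W k) S) :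
    S ∈ contractions E := fun f => by
  refine (HasSum.norm_le_of_bounded (hasSum_clm_apply hS f) (ha.mul_right ‖f‖) fun k => ?_).trans_eq
    (one_mul _)
  rw [smul_apply, norm_smul, Real.norm_of_nonneg (ha0 k)]
  exact mul_le_mul_of_nonneg_left (hW k f) (ha0 k)

theorem sub_sum_mem_positiveOperators [PartialOrder E] [IsOrderedAddMonoid E] [PosSMulMono ℝ E]
    [OrderClosedTopology E] (hW : ∀ k, W k ∈ positiveOperators E) (hS : HasSum W S)
    (s : Finset ι) : S - ∑ k ∈ s, W k ∈ positiveOperators E := fun f hf => by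
  rw [sub_apply, sub_nonneg, sum_apply]
  exact sum_le_hasSum s (fun k _ => hW k f hf) (hasSum_clm_apply hS f)

open PowerSeries in
theorem exists_hasSum_smul_orderedMonomial [PartialOrder E] [IsOrderedAddMonoid E]
    [PosSMulMono ℝ E] [OrderClosedTopology E] [CompleteSpace E] {f : ℝ⟦X⟧}
    (hf : f ∈ nonnegPowerSeries ℝ) (hsum : HasSum (fun y => coeff y f) 1) {d : ℕ}
    {T : Fin d → E →L[ℝ] E} (hcontr : ∀ i, T i ∈ contractions E)
    (hpos : ∀ i, T i ∈ positiveOperators E) (hcomm : ∀ i j, Commute (T i) (T j)) :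
    ∃ S : E →L[ℝ] E,
      HasSum (fun k : Fin d → ℕ => (∏ i, coeff (k i) f) • orderedMonomial T k) S ∧
      S ∈ contractions E ∧ S ∈ positiveOperators E ∧
      ∀ (n m : ℕ) (C : ℝ), (∀ k : Fin d → ℕ, (∀ i, k i < n) →
          C ≤ ∑ j ∈ Finset.range m, ∏ i, coeff (k i) (f ^ j)) →
        ∑ j ∈ Finset.range m, S ^ j
          - C • ∑ k ∈ Fintype.piFinset fun _ : Fin d => Finset.range n, orderedMonomial T k
            ∈ positiveOperators E := by
  have ha0 (k : Fin d → ℕ) : 0 ≤ ∏ i, coeff (k i) f := Finset.prod_nonneg fun i _ => hf (k i)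
  have ha := hasSum_prod_coeff hf hsum d
  have hWcontr := orderedMonomial_mem hcontr
  have hWpos (k : Fin d → ℕ) : (∏ i, coeff (k i) f) • orderedMonomial T k ∈ positiveOperators E :=
    (positiveOperators E).smul_mem (orderedMonomial_mem hpos k) (⟨_, ha0 k⟩ : ℝ≥0)
  obtain ⟨S, hS⟩ := summable_smul_of_mem_contractions ha0 ha.summable hWcontr
  have hremainder := sub_sum_mem_positiveOperators hWpos hS
  refine ⟨S, hS, mem_contractions_of_hasSum_smul ha0 ha hWcontr hS,
    by simpa using hremainder ∅, fun n m C hC => ?_⟩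
  exact sum_pow_sub_smul_sum_orderedMonomial_mem hpos hcomm hf (hremainder _) hC

end PositiveContractions

open PowerSeries in
theorem brunel_operator_general.{u} (d : ℕ) :
    ∃ χ : ℝ, 0 < χ ∧ ∃ a : (Fin d → ℕ) → ℝ, (∀ k, 0 < a k) ∧ HasSum a 1 ∧
    ∃ m : ℕ → ℕ, (∀ n, 0 < m n) ∧
    ∀ (E : Type u) [NormedAddCommGroup E] [NormedSpace ℝ E] [CompleteSpace E] [PartialOrder E]
      [IsOrderedAddMonoid E] [PosSMulMono ℝ E] [OrderClosedTopology E] (T : Fin d → E →L[ℝ] E),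
      (∀ i f, ‖T i f‖ ≤ ‖f‖) → (∀ i f, 0 ≤ f → 0 ≤ T i f) → (∀ i j, Commute (T i) (T j)) →
      ∃ S : E →L[ℝ] E,
        HasSum (fun k : Fin d → ℕ => a k • (List.ofFn fun i => T i ^ k i).prod) S ∧
        (∀ f, ‖S f‖ ≤ ‖f‖) ∧
        (∀ f, 0 ≤ f → 0 ≤ S f) ∧
        ∀ n : ℕ, 1 ≤ n → ∀ f, 0 ≤ f →
          ((n : ℝ) ^ d)⁻¹ •
              ∑ k ∈ Fintype.piFinset (fun _ : Fin d => Finset.range n),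
                (List.ofFn fun i => T i ^ k i).prod f
            ≤ (χ / (m n : ℝ)) • ∑ j ∈ Finset.range (m n), (S ^ j) f := by
  obtain ⟨α, hα0, hα1, hαd⟩ : ∃ α : ℝ, 0 < α ∧ α ≤ 1 / 2 ∧ α * Fintype.card (Fin d) ≤ 1 := by
    refine ⟨1 / (d + 2), by positivity, by gcongr; simp, ?_⟩
    rw [Fintype.card_fin, one_div_mul_eq_div, div_le_one (by positivity)]
    linarith
  have hα : α ≤ 1 := by linarith
  have hB := brunelSeries_mem_nonnegPowerSeries hα0 hα
  have hBsum := hasSum_coeff_brunelSeries hα0 hα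
  obtain ⟨c, hc, hlower⟩ := exists_mul_le_sum_prod_coeff (Fin d) hα0 hα1 hαd
  refine ⟨c⁻¹, inv_pos.mpr hc, fun k => ∏ i, coeff (k i) (brunelSeries α),
    fun k => Finset.prod_pos fun i _ => coeff_brunelSeries_pos hα0 hα (k i),
    hasSum_prod_coeff hB hBsum d, fun n => ⌊(n : ℝ) ^ α⌋₊ + 2, fun n => Nat.succ_pos _, ?_⟩
  intro E _ _ _ _ _ _ _ T hcontr hpos hcomm
  obtain ⟨S, hS, hScontr, hSpos, hdom⟩ :=
    exists_hasSum_smul_orderedMonomial hB hBsum hcontr hpos hcomm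
  refine ⟨S, hS, hScontr, hSpos, fun n hn f hf => ?_⟩
  have hmean := hdom n _ _ (hlower n hn) f hf
  rw [sub_apply, sub_nonneg, smul_apply, sum_apply, sum_apply, Fintype.card_fin] at hmean
  set m := ⌊(n : ℝ) ^ α⌋₊ + 2
  have hm : (m : ℝ) ≠ 0 := Nat.cast_ne_zero.mpr (Nat.succ_ne_zero _)
  convert smul_le_smul_of_nonneg_left hmean (by positivity : 0 ≤ c⁻¹ / (m : ℝ)) using 1
  rw [smul_smul]
  congr 1
  field_simp

instance instPosSMulMonoLp {Ω E : Type*} {_ : MeasurableSpace Ω} {μ : Measure Ω}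
    [NormedAddCommGroup E] [NormedSpace ℝ E] [PartialOrder E] [PosSMulMono ℝ E] {p : ℝ≥0∞} :
    PosSMulMono ℝ (Lp E p μ) where
  smul_le_smul_of_nonneg_left c hc f g hfg := by
    rw [← Lp.coeFn_le] at hfg ⊢
    filter_upwards [hfg, Lp.coeFn_smul c f, Lp.coeFn_smul c g] with x hx hcf hcg
    rw [hcf, hcg]
    exact smul_le_smul_of_nonneg_left hx hc

/-- **Brunel's theorem** (Theorem 5.3, commutative case): for every `d` there are a
constant `χ_d > 0`, a summable family of positive weights `(a_k)_{k ∈ ℕ₀^d}` with sum `1`,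
and a function `m : ℕ → ℕ` such that for any commuting positive contractions
`T₁,…,T_d` of `L¹(μ)` over a σ-finite measure space, the operator
`S = ∑_k a_k T₁^{k₁}⋯T_d^{k_d}` (the series converging in operator norm) is a positive
contraction of `L¹(μ)` satisfying
`(1/n^d) ∑_{i ∈ [0,n)^d} T₁^{i₁}⋯T_d^{i_d} f ≤ (χ_d/m(n)) ∑_{j<m(n)} S^j f`
for all `n ≥ 1` and all `0 ≤ f ∈ L¹(μ)`. -/
theorem brunel_operator (d : ℕ) :
    ∃ χ : ℝ, 0 < χ ∧ ∃ a : (Fin d → ℕ) → ℝ, (∀ k, 0 < a k) ∧ HasSum a 1 ∧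
    ∃ m : ℕ → ℕ, (∀ n, 0 < m n) ∧
    ∀ (Ω : Type) (_ : MeasurableSpace Ω) (μ : Measure Ω), SigmaFinite μ →
    ∀ T : Fin d → (Lp ℝ 1 μ) →L[ℝ] (Lp ℝ 1 μ),
      (∀ i (f : Lp ℝ 1 μ), ‖T i f‖ ≤ ‖f‖) →
      (∀ i (f : Lp ℝ 1 μ), 0 ≤ f → 0 ≤ T i f) →
      (∀ i j, Commute (T i) (T j)) →
      ∃ S : (Lp ℝ 1 μ) →L[ℝ] (Lp ℝ 1 μ),
        HasSum (fun k : Fin d → ℕ => a k • (List.ofFn fun i => T i ^ k i).prod) S ∧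
        (∀ f : Lp ℝ 1 μ, ‖S f‖ ≤ ‖f‖) ∧
        (∀ f : Lp ℝ 1 μ, 0 ≤ f → 0 ≤ S f) ∧
        ∀ n : ℕ, 1 ≤ n → ∀ f : Lp ℝ 1 μ, 0 ≤ f →
          ((n : ℝ) ^ d)⁻¹ •
              ∑ k ∈ Fintype.piFinset (fun _ : Fin d => Finset.range n),
                (List.ofFn fun i => T i ^ k i).prod f
            ≤ (χ / (m n : ℝ)) • ∑ j ∈ Finset.range (m n), (S ^ j) f := by
  obtain ⟨χ, hχ, a, ha, hsum, m, hm, hE⟩ := brunel_operator_general d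
  exact ⟨χ, hχ, a, ha, hsum, m, hm, fun _ _ μ _ => hE (Lp ℝ 1 μ)⟩
end

section
/- Let (Ω, 𝒜, μ) be a σ-finite measure space and T a positive Dunford–Schwartz operator. Then for every f ∈ L¹(μ) with f ≥ 0 a.e. and every ν > 0 there exists a measurable set E ⊆ Ω such that μ(Ω∖E) ≤ ‖f‖₁/ν and sup_n ‖(A_n(f))·1_E‖_∞ ≤ ν, where A_n(f) = (1/n) ∑_{k=0}^{n−1} T^k f. -/
open MeasureTheory Filter Set ENNReal Topology

variable {Ω : Type*} [MeasurableSpace Ω]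

/-- `f` belongs to `L¹(μ) + L^∞(μ)`. -/
def MemL1pLinf (μ : Measure Ω) (f : Ω →ₘ[μ] ℝ) : Prop :=
  ∃ g h : Ω →ₘ[μ] ℝ, eLpNorm g 1 μ ≠ ∞ ∧ eLpNorm h ⊤ μ ≠ ∞ ∧ f = g + h

/-- A positive Dunford–Schwartz operator: linear and positive on `L¹+L^∞`,
contracting both the `L¹`- and `L^∞`-norms. -/
structure IsPosDS (μ : Measure Ω) (T : (Ω →ₘ[μ] ℝ) → (Ω →ₘ[μ] ℝ)) : Prop where
  map_add : ∀ f g, MemL1pLinf μ f → MemL1pLinf μ g → T (f + g) = T f + T g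
  map_smul : ∀ (c : ℝ) (f), MemL1pLinf μ f → T (c • f) = c • T f
  map_pos : ∀ f, MemL1pLinf μ f → 0 ≤ f → 0 ≤ T f
  norm_one : ∀ f, MemL1pLinf μ f → eLpNorm (T f) 1 μ ≤ eLpNorm f 1 μ
  norm_top : ∀ f, MemL1pLinf μ f → eLpNorm (T f) ⊤ μ ≤ eLpNorm f ⊤ μ

/-- The Cesàro averages `A_n(f) = (1/n) ∑_{k<n} T^k f`. -/
noncomputable def cesaro (μ : Measure Ω) (T : (Ω →ₘ[μ] ℝ) → (Ω →ₘ[μ] ℝ)) (n : ℕ)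
    (f : Ω →ₘ[μ] ℝ) : Ω →ₘ[μ] ℝ :=
  (n : ℝ)⁻¹ • ∑ k ∈ Finset.range n, T^[k] f

/-- Almost uniform convergence of a net `F` to `f`. -/
def AuTendsto {ι : Type*} (μ : Measure Ω) (l : Filter ι) (F : ι → Ω →ₘ[μ] ℝ)
    (f : Ω →ₘ[μ] ℝ) : Prop :=
  ∀ ε : ℝ, 0 < ε → ∃ E : Set Ω, MeasurableSet E ∧ μ Eᶜ ≤ ENNReal.ofReal ε ∧
    Tendsto (fun i => eLpNorm (E.indicator (⇑(F i - f))) ⊤ μ) l (𝓝 0)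

/-- `R_μ`: elements of `L¹+L^∞` whose distribution tails are finite. -/
def MemRmu (μ : Measure Ω) (f : Ω →ₘ[μ] ℝ) : Prop :=
  MemL1pLinf μ f ∧ ∀ lam : ℝ, 0 < lam → μ {ω | lam < |f ω|} < ∞

/-!
Fix `g ∈ L¹` and `ν > 0`. Instead of the maximal function `max_{k ≤ n} (S_k g - k ν)`, where
`S_k g = ∑_{j < k} T^j g`, consider the sequence `M₀ = 0`, `M_{n+1} = (g + T M_n - ν)⁺`. It
dominates `S_n g - n ν` because `T 1 ≤ 1`, it increases because `T` is positive, and each term lies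
in `L¹`. On `{M_{n+1} > 0}` the function `g + T M_n` exceeds `M_{n+1}` by `ν`, so Markov's argument
gives `‖M_{n+1}‖₁ + ν μ{M_{n+1} > 0} ≤ ‖g‖₁ + ‖T M_n‖₁ ≤ ‖g‖₁ + ‖M_{n+1}‖₁`. Cancelling the
finite norm bounds `μ{M_{n+1} > 0}` by `‖g‖₁ / ν` uniformly in `n`. With `g = |f|`, off the union
of these increasing sets `|S_n f| ≤ S_n |f| ≤ n ν`.
-/

section AEEqFun

variable {μ : Measure Ω}

instance {γ : Type*} [TopologicalSpace γ] [AddCommMonoid γ] [PartialOrder γ] [ContinuousAdd γ]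
    [IsOrderedAddMonoid γ] : IsOrderedAddMonoid (Ω →ₘ[μ] γ) where
  add_le_add_left f g hfg h := by
    rw [← AEEqFun.coeFn_le] at hfg ⊢
    filter_upwards [hfg, AEEqFun.coeFn_add f h, AEEqFun.coeFn_add g h] with x hx hfh hgh
    simpa only [hfh, hgh, Pi.add_apply] using add_le_add_left hx (h x)

theorem eLpNorm_aeEqFun_abs {E : Type*} [NormedAddCommGroup E] [Lattice E] [HasSolidNorm E]
    [IsOrderedAddMonoid E] (p : ℝ≥0∞) (f : Ω →ₘ[μ] E) :
    eLpNorm (|f| : Ω →ₘ[μ] E) p μ = eLpNorm f p μ := by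
  refine eLpNorm_congr_norm_ae ?_
  filter_upwards [AEEqFun.coeFn_abs f] with x hx
  rw [hx, norm_abs_eq_norm]

theorem const_mem_Lp_top {E : Type*} [NormedAddCommGroup E] (c : E) :
    AEEqFun.const Ω c ∈ Lp E ∞ μ :=
  Lp.mem_Lp_iff_memLp.2 ((memLp_congr_ae (AEEqFun.coeFn_const Ω c)).2 (memLp_top_const c))

theorem coeFn_posPart_sub_const (g : Ω →ₘ[μ] ℝ) (c : ℝ) :
    ((g - AEEqFun.const Ω c)⁺ : Ω →ₘ[μ] ℝ) =ᵐ[μ] fun x => (g x - c)⁺ := by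
  filter_upwards [AEEqFun.coeFn_sup (g - AEEqFun.const Ω c) 0,
    AEEqFun.coeFn_sub g (AEEqFun.const Ω c), AEEqFun.coeFn_const (μ := μ) Ω c,
    AEEqFun.coeFn_zero (μ := μ) (α := Ω) (β := ℝ)] with x hsup hsub hconst hzero
  rw [posPart_def, hsup, hsub, Pi.sub_apply, hconst, hzero]
  rfl

theorem eLpNorm_posPart_sub_const_add_mul_meas_pos_le (g : Ω →ₘ[μ] ℝ) {c : ℝ} (hc : 0 ≤ c) :
    eLpNorm ((g - AEEqFun.const Ω c)⁺ : Ω →ₘ[μ] ℝ) 1 μ +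
        ENNReal.ofReal c * μ {x | 0 < ((g - AEEqFun.const Ω c)⁺ : Ω →ₘ[μ] ℝ) x} ≤
      eLpNorm g 1 μ := by
  set h : Ω →ₘ[μ] ℝ := (g - AEEqFun.const Ω c)⁺
  have hh : h =ᵐ[μ] fun x => (g x - c)⁺ := coeFn_posPart_sub_const g c
  have hle : ∀ᵐ x ∂μ, ‖h x‖ₑ ≤ ‖g x‖ₑ := by
    filter_upwards [hh] with x hx
    rw [hx, enorm_le_iff_norm_le, Real.norm_of_nonneg (posPart_nonneg _)]
    exact sup_le ((sub_le_self _ hc).trans (Real.le_norm_self _)) (norm_nonneg _)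
  have hgap : ∀ᵐ x ∂μ, 0 < h x → ‖h x‖ₑ + ENNReal.ofReal c ≤ ‖g x‖ₑ := by
    filter_upwards [hh] with x hx hpos
    rw [hx, posPart_pos_iff, sub_pos] at hpos
    have hsub : 0 ≤ g x - c := sub_nonneg.2 hpos.le
    rw [hx, posPart_of_nonneg hsub, Real.enorm_of_nonneg hsub,
      Real.enorm_of_nonneg (hc.trans hpos.le), ← ENNReal.ofReal_add hsub hc, sub_add_cancel]
  simp only [eLpNorm_one_eq_lintegral_enorm]
  calc ∫⁻ x, ‖h x‖ₑ ∂μ + ENNReal.ofReal c * μ {x | 0 < h x}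
      ≤ ∫⁻ x, ‖h x‖ₑ ∂μ + ENNReal.ofReal c * μ {x | ‖h x‖ₑ + ENNReal.ofReal c ≤ ‖g x‖ₑ} := by
        gcongr _ + _ * ?_
        exact measure_mono_ae hgap
    _ ≤ ∫⁻ x, ‖g x‖ₑ ∂μ :=
        lintegral_add_mul_meas_add_le_le_lintegral hle g.aestronglyMeasurable.enorm _

end AEEqFun

section MemL1pLinf

variable {μ : Measure Ω} {f g : Ω →ₘ[μ] ℝ}

theorem memL1pLinf_iff_mem_sup : MemL1pLinf μ f ↔ f ∈ Lp ℝ 1 μ ⊔ Lp ℝ ∞ μ := by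
  simp only [MemL1pLinf, AddSubgroup.mem_sup, Lp.mem_Lp_iff_eLpNorm_lt_top, lt_top_iff_ne_top,
    exists_and_left, eq_comm]

theorem MemL1pLinf.of_mem_L1 (hf : f ∈ Lp ℝ 1 μ) : MemL1pLinf μ f :=
  memL1pLinf_iff_mem_sup.2 (AddSubgroup.mem_sup_left hf)

theorem MemL1pLinf.of_mem_Linf (hf : f ∈ Lp ℝ ∞ μ) : MemL1pLinf μ f :=
  memL1pLinf_iff_mem_sup.2 (AddSubgroup.mem_sup_right hf)

theorem MemL1pLinf.const (c : ℝ) : MemL1pLinf μ (AEEqFun.const Ω c) :=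
  .of_mem_Linf (const_mem_Lp_top c)

theorem MemL1pLinf.add (hf : MemL1pLinf μ f) (hg : MemL1pLinf μ g) : MemL1pLinf μ (f + g) := by
  rw [memL1pLinf_iff_mem_sup] at *
  exact add_mem hf hg

theorem MemL1pLinf.neg (hf : MemL1pLinf μ f) : MemL1pLinf μ (-f) := by
  rw [memL1pLinf_iff_mem_sup] at *
  exact neg_mem hf

theorem MemL1pLinf.sub (hf : MemL1pLinf μ f) (hg : MemL1pLinf μ g) : MemL1pLinf μ (f - g) := by
  rw [memL1pLinf_iff_mem_sup] at *
  exact sub_mem hf hg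

theorem MemL1pLinf.sum {ι : Type*} {s : Finset ι} {u : ι → Ω →ₘ[μ] ℝ}
    (hu : ∀ i ∈ s, MemL1pLinf μ (u i)) : MemL1pLinf μ (∑ i ∈ s, u i) := by
  simp only [memL1pLinf_iff_mem_sup] at *
  exact sum_mem hu

end MemL1pLinf

namespace IsPosDS

variable {μ : Measure Ω} {T : (Ω →ₘ[μ] ℝ) → (Ω →ₘ[μ] ℝ)} {f g : Ω →ₘ[μ] ℝ}

theorem map_zero (hT : IsPosDS μ T) : T 0 = 0 := by
  simpa only [zero_smul] using hT.map_smul 0 0 (.of_mem_L1 (zero_mem _))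

theorem map_neg (hT : IsPosDS μ T) (hf : MemL1pLinf μ f) : T (-f) = -T f := by
  simpa only [neg_smul, one_smul] using hT.map_smul (-1) f hf

theorem map_sum (hT : IsPosDS μ T) {ι : Type*} (s : Finset ι) {u : ι → Ω →ₘ[μ] ℝ}
    (hu : ∀ i ∈ s, MemL1pLinf μ (u i)) : T (∑ i ∈ s, u i) = ∑ i ∈ s, T (u i) := by
  classical
  induction s using Finset.induction_on with
  | empty => exact hT.map_zero
  | insert i s hi ih =>
    rw [Finset.forall_mem_insert] at hu
    rw [Finset.sum_insert hi, Finset.sum_insert hi, ← ih hu.2, hT.map_add _ _ hu.1 (.sum hu.2)]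

theorem mono (hT : IsPosDS μ T) (hf : MemL1pLinf μ f) (hg : MemL1pLinf μ g) (hfg : f ≤ g) :
    T f ≤ T g := by
  have hsub : 0 ≤ T (g - f) := hT.map_pos _ (hg.sub hf) (sub_nonneg.2 hfg)
  calc T f ≤ T f + T (g - f) := le_add_of_nonneg_right hsub
    _ = T g := by rw [← hT.map_add _ _ hf (hg.sub hf), add_sub_cancel]

theorem abs_map_le (hT : IsPosDS μ T) (hf : MemL1pLinf μ f) (hg : MemL1pLinf μ g)
    (hfg : |f| ≤ g) : |T f| ≤ T g := by
  rw [abs_le'] at hfg ⊢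
  rw [← hT.map_neg hf]
  exact ⟨hT.mono hf hg hfg.1, hT.mono hf.neg hg hfg.2⟩

theorem map_const_le (hT : IsPosDS μ T) {c : ℝ} (hc : 0 ≤ c) :
    T (AEEqFun.const Ω c) ≤ AEEqFun.const Ω c := by
  have hnorm : eLpNorm (T (AEEqFun.const Ω c)) ∞ μ ≤ ENNReal.ofReal c := by
    refine (hT.norm_top _ (.const c)).trans ?_
    rw [eLpNorm_congr_ae (AEEqFun.coeFn_const Ω c), eLpNorm_exponent_top]
    exact eLpNormEssSup_le_of_ae_bound (.of_forall fun _ => (Real.norm_of_nonneg hc).le)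
  rw [← AEEqFun.coeFn_le]
  filter_upwards [ae_le_eLpNormEssSup (f := T (AEEqFun.const Ω c)) (μ := μ),
    AEEqFun.coeFn_const (μ := μ) Ω c] with x hx hconst
  rw [← eLpNorm_exponent_top] at hx
  rw [hconst]
  have hxc := hx.trans hnorm
  rw [Real.enorm_eq_ofReal_abs, ENNReal.ofReal_le_ofReal_iff hc] at hxc
  exact (le_abs_self _).trans hxc

theorem map_mem_L1 (hT : IsPosDS μ T) (hf : f ∈ Lp ℝ 1 μ) : T f ∈ Lp ℝ 1 μ :=
  Lp.mem_Lp_iff_eLpNorm_lt_top.2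
    ((hT.norm_one f (.of_mem_L1 hf)).trans_lt (Lp.mem_Lp_iff_eLpNorm_lt_top.1 hf))

theorem map_memL1pLinf (hT : IsPosDS μ T) (hf : MemL1pLinf μ f) : MemL1pLinf μ (T f) := by
  obtain ⟨g, h, hg, hh, rfl⟩ := hf
  have hg' : MemL1pLinf μ g := .of_mem_L1 (Lp.mem_Lp_iff_eLpNorm_lt_top.2 hg.lt_top)
  have hh' : MemL1pLinf μ h := .of_mem_Linf (Lp.mem_Lp_iff_eLpNorm_lt_top.2 hh.lt_top)
  exact ⟨T g, T h, ne_top_of_le_ne_top hg (hT.norm_one g hg'),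
    ne_top_of_le_ne_top hh (hT.norm_top h hh'), hT.map_add g h hg' hh'⟩

theorem iterate_memL1pLinf (hT : IsPosDS μ T) (hf : MemL1pLinf μ f) (n : ℕ) :
    MemL1pLinf μ (T^[n] f) := by
  induction n with
  | zero => exact hf
  | succ n ih => simpa only [Function.iterate_succ_apply'] using hT.map_memL1pLinf ih

theorem abs_iterate_le (hT : IsPosDS μ T) (hf : MemL1pLinf μ f) (hg : MemL1pLinf μ g)
    (hfg : |f| ≤ g) (n : ℕ) : |T^[n] f| ≤ T^[n] g := by
  induction n with
  | zero => exact hfg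
  | succ n ih =>
    simpa only [Function.iterate_succ_apply'] using
      hT.abs_map_le (hT.iterate_memL1pLinf hf n) (hT.iterate_memL1pLinf hg n) ih

theorem abs_sum_iterate_le (hT : IsPosDS μ T) (hf : MemL1pLinf μ f) (hg : MemL1pLinf μ g)
    (hfg : |f| ≤ g) (n : ℕ) :
    |∑ k ∈ Finset.range n, T^[k] f| ≤ ∑ k ∈ Finset.range n, T^[k] g :=
  (Finset.le_sum_of_subadditive _ abs_zero.le abs_add_le _ _).trans
    (Finset.sum_le_sum fun k _ => hT.abs_iterate_le hf hg hfg k)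

theorem sum_range_succ_iterate (hT : IsPosDS μ T) (hf : MemL1pLinf μ f) (n : ℕ) :
    ∑ k ∈ Finset.range (n + 1), T^[k] f = f + T (∑ k ∈ Finset.range n, T^[k] f) := by
  rw [Finset.sum_range_succ', add_comm, hT.map_sum _ fun k _ => hT.iterate_memL1pLinf hf k]
  simp only [Function.iterate_succ_apply', Function.iterate_zero_apply]

end IsPosDS

/-- The sequence `M₀ = 0`, `M_{n+1} = (g + T M_n - ν)⁺`, an integrable substitute for the maximal
function `max_{k ≤ n} (∑_{j < k} T^j g - k ν)`. Truncating at every step keeps it in `L¹` even when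
`μ` is infinite. -/
noncomputable def hopfExcess {μ : Measure Ω} (T : (Ω →ₘ[μ] ℝ) → (Ω →ₘ[μ] ℝ)) (g : Ω →ₘ[μ] ℝ)
    (ν : ℝ) : ℕ → (Ω →ₘ[μ] ℝ)
  | 0 => 0
  | n + 1 => (g + T (hopfExcess T g ν n) - AEEqFun.const Ω ν)⁺

section HopfExcess

variable {μ : Measure Ω} {T : (Ω →ₘ[μ] ℝ) → (Ω →ₘ[μ] ℝ)} {g : Ω →ₘ[μ] ℝ} {ν : ℝ}

theorem hopfExcess_nonneg (n : ℕ) : 0 ≤ hopfExcess T g ν n := by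
  cases n with
  | zero => exact le_rfl
  | succ n => exact posPart_nonneg _

theorem eLpNorm_hopfExcess_succ_add_mul_meas_pos_le (hν : 0 ≤ ν) (n : ℕ) :
    eLpNorm (hopfExcess T g ν (n + 1)) 1 μ +
        ENNReal.ofReal ν * μ {x | 0 < hopfExcess T g ν (n + 1) x} ≤
      eLpNorm g 1 μ + eLpNorm (T (hopfExcess T g ν n)) 1 μ :=
  calc _ ≤ eLpNorm (g + T (hopfExcess T g ν n) : Ω →ₘ[μ] ℝ) 1 μ :=
        eLpNorm_posPart_sub_const_add_mul_meas_pos_le _ hν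
    _ ≤ _ := by
        rw [eLpNorm_congr_ae (AEEqFun.coeFn_add _ _)]
        exact eLpNorm_add_le g.aestronglyMeasurable (AEEqFun.aestronglyMeasurable _) le_rfl

theorem hopfExcess_mem_L1 (hT : IsPosDS μ T) (hg : g ∈ Lp ℝ 1 μ) (hν : 0 ≤ ν) (n : ℕ) :
    hopfExcess T g ν n ∈ Lp ℝ 1 μ := by
  induction n with
  | zero => exact zero_mem _
  | succ n ih =>
    exact Lp.mem_Lp_iff_eLpNorm_lt_top.2 <| le_self_add.trans_lt <|
      (eLpNorm_hopfExcess_succ_add_mul_meas_pos_le hν n).trans_lt <|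
        ENNReal.add_lt_top.2 ⟨hg, hT.map_mem_L1 ih⟩

theorem hopfExcess_le_succ (hT : IsPosDS μ T) (hg : g ∈ Lp ℝ 1 μ) (hν : 0 ≤ ν) (n : ℕ) :
    hopfExcess T g ν n ≤ hopfExcess T g ν (n + 1) := by
  induction n with
  | zero => exact hopfExcess_nonneg 1
  | succ n ih =>
    have hTle := hT.mono (.of_mem_L1 (hopfExcess_mem_L1 hT hg hν n))
      (.of_mem_L1 (hopfExcess_mem_L1 hT hg hν (n + 1))) ih
    exact posPart_mono (sub_le_sub_right (add_le_add_right hTle g) _)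

theorem ae_monotone_hopfExcess (hT : IsPosDS μ T) (hg : g ∈ Lp ℝ 1 μ) (hν : 0 ≤ ν) :
    ∀ᵐ x ∂μ, Monotone fun n => hopfExcess T g ν n x := by
  have hsucc : ∀ᵐ x ∂μ, ∀ n, hopfExcess T g ν n x ≤ hopfExcess T g ν (n + 1) x :=
    ae_all_iff.2 fun n => AEEqFun.coeFn_le.2 (hopfExcess_le_succ hT hg hν n)
  exact hsucc.mono fun _ => monotone_nat_of_le_succ

theorem meas_hopfExcess_succ_pos_le (hT : IsPosDS μ T) (hg : g ∈ Lp ℝ 1 μ) (hν : 0 < ν)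
    (n : ℕ) : μ {x | 0 < hopfExcess T g ν (n + 1) x} ≤ eLpNorm g 1 μ / ENNReal.ofReal ν := by
  have hfinite : eLpNorm (hopfExcess T g ν (n + 1)) 1 μ ≠ ∞ :=
    (hopfExcess_mem_L1 hT hg hν.le (n + 1)).ne
  have hmono : eLpNorm (hopfExcess T g ν n) 1 μ ≤ eLpNorm (hopfExcess T g ν (n + 1)) 1 μ := by
    refine eLpNorm_mono_ae ?_
    filter_upwards [AEEqFun.coeFn_le.2 (hopfExcess_nonneg (T := T) (g := g) (ν := ν) n),
      AEEqFun.coeFn_le.2 (hopfExcess_le_succ hT hg hν.le n),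
      AEEqFun.coeFn_zero (μ := μ) (α := Ω) (β := ℝ)] with x hnonneg hle hzero
    rw [hzero, Pi.zero_apply] at hnonneg
    rwa [Real.norm_of_nonneg hnonneg, Real.norm_of_nonneg (hnonneg.trans hle)]
  have hnorm : eLpNorm (T (hopfExcess T g ν n)) 1 μ ≤ eLpNorm (hopfExcess T g ν (n + 1)) 1 μ :=
    (hT.norm_one _ (.of_mem_L1 (hopfExcess_mem_L1 hT hg hν.le n))).trans hmono
  rw [ENNReal.le_div_iff_mul_le (.inl (ENNReal.ofReal_pos.2 hν).ne') (.inl ENNReal.ofReal_ne_top),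
    mul_comm, ← ENNReal.add_le_add_iff_left hfinite]
  calc _ ≤ eLpNorm g 1 μ + eLpNorm (T (hopfExcess T g ν n)) 1 μ :=
        eLpNorm_hopfExcess_succ_add_mul_meas_pos_le hν.le n
    _ ≤ _ := by rw [add_comm]; gcongr

theorem meas_iUnion_hopfExcess_pos_le (hT : IsPosDS μ T) (hg : g ∈ Lp ℝ 1 μ) (hν : 0 < ν) :
    μ (⋃ n, {x | 0 < hopfExcess T g ν n x}) ≤ eLpNorm g 1 μ / ENNReal.ofReal ν := by
  rw [measure_iUnion_eq_iSup_accumulate]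
  refine iSup_le fun n => (measure_mono_ae ?_).trans (meas_hopfExcess_succ_pos_le hT hg hν n)
  filter_upwards [ae_monotone_hopfExcess hT hg hν.le] with x hmono hx
  obtain ⟨k, hkn, hk⟩ := Set.mem_accumulate.1 hx
  exact hk.trans_le (hmono (hkn.trans n.le_succ))

theorem sum_iterate_le_hopfExcess_add_const (hT : IsPosDS μ T) (hg : g ∈ Lp ℝ 1 μ) (hν : 0 ≤ ν)
    (n : ℕ) :
    ∑ k ∈ Finset.range n, T^[k] g ≤ hopfExcess T g ν n + AEEqFun.const Ω (n * ν) := by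
  induction n with
  | zero =>
    have hconst : (AEEqFun.const Ω ((0 : ℕ) * ν) : Ω →ₘ[μ] ℝ) = 0 := by
      rw [Nat.cast_zero, zero_mul]; rfl
    rw [Finset.sum_range_zero, hconst, add_zero, hopfExcess]
  | succ n ih =>
    set M := hopfExcess T g ν n
    have hM : MemL1pLinf μ M := .of_mem_L1 (hopfExcess_mem_L1 hT hg hν n)
    have hS : MemL1pLinf μ (∑ k ∈ Finset.range n, T^[k] g) :=
      .sum fun k _ => hT.iterate_memL1pLinf (.of_mem_L1 hg) k
    have hconst : (AEEqFun.const Ω ((n + 1 : ℕ) * ν) : Ω →ₘ[μ] ℝ) =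
        AEEqFun.const Ω ν + AEEqFun.const Ω (n * ν) := by
      rw [Nat.cast_succ, add_one_mul, add_comm]; rfl
    calc ∑ k ∈ Finset.range (n + 1), T^[k] g
        = g + T (∑ k ∈ Finset.range n, T^[k] g) := hT.sum_range_succ_iterate (.of_mem_L1 hg) n
      _ ≤ g + T (M + AEEqFun.const Ω (n * ν)) := by
        gcongr
        exact hT.mono hS (hM.add (.const _)) ih
      _ = g + (T M + T (AEEqFun.const Ω (n * ν))) := by rw [hT.map_add _ _ hM (.const _)]
      _ ≤ g + (T M + AEEqFun.const Ω (n * ν)) := by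
        gcongr
        exact hT.map_const_le (by positivity)
      _ = (g + T M - AEEqFun.const Ω ν) + AEEqFun.const Ω ((n + 1 : ℕ) * ν) := by
        rw [hconst]; abel
      _ ≤ hopfExcess T g ν (n + 1) + AEEqFun.const Ω ((n + 1 : ℕ) * ν) := by
        gcongr
        exact le_posPart _

theorem eLpNorm_indicator_cesaro_le (hT : IsPosDS μ T) {f : Ω →ₘ[μ] ℝ} (hf : MemL1pLinf μ f)
    (hg : g ∈ Lp ℝ 1 μ) (hfg : |f| ≤ g) (hν : 0 ≤ ν) {E : Set Ω} {n : ℕ}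
    (hE : ∀ x ∈ E, hopfExcess T g ν n x ≤ 0) :
    eLpNorm (E.indicator ⇑(cesaro μ T n f)) ∞ μ ≤ ENNReal.ofReal ν := by
  have habs : |∑ k ∈ Finset.range n, T^[k] f| ≤
      hopfExcess T g ν n + AEEqFun.const Ω (n * ν) :=
    (hT.abs_sum_iterate_le hf (.of_mem_L1 hg) hfg n).trans
      (sum_iterate_le_hopfExcess_add_const hT hg hν n)
  rw [eLpNorm_exponent_top]
  refine eLpNormEssSup_le_of_ae_bound ?_
  filter_upwards [AEEqFun.coeFn_le.2 habs, AEEqFun.coeFn_abs (∑ k ∈ Finset.range n, T^[k] f),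
    AEEqFun.coeFn_add (hopfExcess T g ν n) (AEEqFun.const Ω (n * ν)),
    AEEqFun.coeFn_const (μ := μ) Ω (n * ν),
    AEEqFun.coeFn_smul (n : ℝ)⁻¹ (∑ k ∈ Finset.range n, T^[k] f)]
    with x hle hxabs hadd hconst hsmul
  by_cases hx : x ∈ E
  · rw [hxabs, hadd, Pi.add_apply, hconst, Function.const_apply] at hle
    have hsum : |(∑ k ∈ Finset.range n, T^[k] f : Ω →ₘ[μ] ℝ) x| ≤ n * ν := by
      linarith [hE x hx]
    rw [Set.indicator_of_mem hx, cesaro, hsmul, Pi.smul_apply, norm_smul, norm_inv,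
      Real.norm_natCast, Real.norm_eq_abs]
    exact inv_mul_le_of_le_mul₀ n.cast_nonneg hν hsum
  · rw [Set.indicator_of_notMem hx, norm_zero]
    exact hν

end HopfExcess

theorem maximal_ergodic_inequality_general (μ : Measure Ω)
    (T : (Ω →ₘ[μ] ℝ) → (Ω →ₘ[μ] ℝ)) (hT : IsPosDS μ T)
    (f : Ω →ₘ[μ] ℝ) (hf1 : eLpNorm f 1 μ ≠ ∞) (ν : ℝ) (hν : 0 < ν) :
    ∃ E : Set Ω, MeasurableSet E ∧ μ Eᶜ ≤ eLpNorm f 1 μ / ENNReal.ofReal ν ∧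
      ∀ n : ℕ, eLpNorm (E.indicator ⇑(cesaro μ T n f)) ⊤ μ ≤ ENNReal.ofReal ν := by
  have hf : f ∈ Lp ℝ 1 μ := Lp.mem_Lp_iff_eLpNorm_lt_top.2 hf1.lt_top
  have hnorm : eLpNorm (|f| : Ω →ₘ[μ] ℝ) 1 μ = eLpNorm f 1 μ := eLpNorm_aeEqFun_abs 1 f
  have habs : |f| ∈ Lp ℝ 1 μ := Lp.mem_Lp_iff_eLpNorm_lt_top.2 (hnorm ▸ hf1.lt_top)
  refine ⟨(⋃ n, {x | 0 < hopfExcess T |f| ν n x})ᶜ, ?_, ?_, fun n => ?_⟩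
  · exact (MeasurableSet.iUnion fun n =>
      measurableSet_lt measurable_const (AEEqFun.measurable _)).compl
  · rw [compl_compl, ← hnorm]
    exact meas_iUnion_hopfExcess_pos_le hT habs hν
  · refine eLpNorm_indicator_cesaro_le hT (.of_mem_L1 hf) habs le_rfl hν.le fun x hx => ?_
    exact not_lt.1 fun hpos => hx (Set.mem_iUnion.2 ⟨n, hpos⟩)

/-- **Commutative case of Theorem 5.4 (Yeadon/Hopf maximal ergodic inequality)**:
for a positive Dunford–Schwartz operator `T` on a σ-finite measure space, `0 ≤ f ∈ L¹(μ)`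
and `ν > 0`, there is a measurable set `E` with `μ(Ω∖E) ≤ ‖f‖₁/ν` and
`sup_n ‖A_n(f)·1_E‖_∞ ≤ ν`. -/
theorem maximal_ergodic_inequality (μ : Measure Ω) [SigmaFinite μ]
    (T : (Ω →ₘ[μ] ℝ) → (Ω →ₘ[μ] ℝ)) (hT : IsPosDS μ T)
    (f : Ω →ₘ[μ] ℝ) (hf1 : eLpNorm f 1 μ ≠ ∞) (hfpos : 0 ≤ f)
    (ν : ℝ) (hν : 0 < ν) :
    ∃ E : Set Ω, MeasurableSet E ∧ μ Eᶜ ≤ eLpNorm f 1 μ / ENNReal.ofReal ν ∧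
      ∀ n : ℕ, eLpNorm (E.indicator ⇑(cesaro μ T n f)) ⊤ μ ≤ ENNReal.ofReal ν :=
  maximal_ergodic_inequality_general μ T hT f hf1 ν hν
end
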